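/- For each contest c ∈ {1,…,C}, the function UB is concave on the set Q_{{c}}; that is, for all p, p' ∈ Q_{{c}} and t ∈ [0,1], UB(t·p + (1−t)·p') ≥ t·UB(p) + (1−t)·UB(p'). -/

import Mathlib

open Finset

noncomputable section

/-- The upper-bound objective `UB(p)`. -/
def UB (C : ℕ) (v : Fin C → ℝ) (X Y : ℝ) (p : Fin C → ℝ) : ℝ :=
  if Y / X * (∑ c, v c * p c) ≤ ⨆ c, v c * p c then
    1 - Y / (2 * X) * (∑ c, v c * p c) ^ 2 / (⨆ c, v c * p c)
  else
    1 - (∑ c, v c * p c) + X / (2 * Y) * (⨆ c, v c * p c)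

/-- `Q_S`: probability vectors for which `v_i p_i` is maximal for every `i ∈ S`. -/
def Qset (C : ℕ) (v : Fin C → ℝ) (S : Finset (Fin C)) : Set (Fin C → ℝ) :=
  {p | p ∈ stdSimplex ℝ (Fin C) ∧ ∀ i ∈ S, v i * p i = ⨆ c, v c * p c}

/-!
On `Q_S` with `c ∈ S` the maximum `m = max_c v_c p_c` equals `v_c p_c`, so it is linear in `p`, like
`s = vᵀp`. As a function of `(s, m)` with `m > 0`, the bound is the least value over `l ≤ 1` of
`1 - l s + l² (X / (2Y)) m`: the unconstrained minimiser `l = (Y / X) s / m` is admissible exactly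
in the first case of the definition, and otherwise `l = 1` is optimal. Each of these expressions is
affine in `(s, m)`, and a pointwise minimum of affine functions is concave.
-/

theorem concaveOn_of_isLeast_image {𝕜 E β ι : Type*} [Semiring 𝕜] [PartialOrder 𝕜]
    [AddCommMonoid E] [AddCommMonoid β] [PartialOrder β] [IsOrderedAddMonoid β] [SMul 𝕜 E]
    [Module 𝕜 β] [PosSMulMono 𝕜 β] {s : Set E} {f : E → β} {g : ι → E → β} {I : Set ι}
    (hs : Convex 𝕜 s) (hg : ∀ i ∈ I, ConcaveOn 𝕜 s (g i))
    (hf : ∀ x ∈ s, IsLeast ((g · x) '' I) (f x)) : ConcaveOn 𝕜 s f := by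
  refine ⟨hs, fun x hx y hy a b ha hb hab => ?_⟩
  obtain ⟨i, hi, hfi⟩ := (hf _ (hs hx hy ha hb hab)).1
  have hx_le : f x ≤ g i x := (hf x hx).2 ⟨i, hi, rfl⟩
  have hy_le : f y ≤ g i y := (hf y hy).2 ⟨i, hi, rfl⟩
  calc a • f x + b • f y ≤ a • g i x + b • g i y := by gcongr
    _ ≤ g i (a • x + b • y) := (hg i hi).2 hx hy ha hb hab
    _ = f (a • x + b • y) := hfi

theorem eq_ciSup_iff_forall_le {ι α : Type*} [Finite ι] [ConditionallyCompleteLattice α]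
    {f : ι → α} {i : ι} : f i = ⨆ j, f j ↔ ∀ j, f j ≤ f i := by
  have : Nonempty ι := ⟨i⟩
  have hbdd : BddAbove (Set.range f) := (Set.finite_range f).bddAbove
  exact ⟨fun h j => h ▸ le_ciSup hbdd j, fun h => (le_ciSup hbdd i).antisymm (ciSup_le h)⟩

theorem exists_pos_of_mem_stdSimplex {𝕜 ι : Type*} [Semiring 𝕜] [LinearOrder 𝕜]
    [IsOrderedRing 𝕜] [Nontrivial 𝕜] [Fintype ι] {p : ι → 𝕜} (hp : p ∈ stdSimplex 𝕜 ι) :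
    ∃ i, 0 < p i := by
  by_contra! h
  have hsum_le : ∑ i, p i ≤ 0 := sum_nonpos fun i _ => h i
  exact zero_lt_one.not_ge (hp.2 ▸ hsum_le)

section ValueMax

variable {X Y : ℝ}

/-- The objective `UB` as a function of the pair `q = (vᵀp, max_c v_c p_c)`, through which alone it
depends on `p`. -/
def valueMaxUB (X Y : ℝ) (q : ℝ × ℝ) : ℝ :=
  if Y / X * q.1 ≤ q.2 then 1 - Y / (2 * X) * q.1 ^ 2 / q.2 else 1 - q.1 + X / (2 * Y) * q.2

/-- An affine function of `q = (s, m)` which, for `l ≤ 1`, majorises `valueMaxUB` on the half-plane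
`0 < m` and touches it along `s = l (X / Y) m`. -/
def supportingUB (X Y l : ℝ) (q : ℝ × ℝ) : ℝ :=
  1 - l * q.1 + l ^ 2 * (X / (2 * Y) * q.2)

theorem concaveOn_supportingUB {s : Set (ℝ × ℝ)} (hs : Convex ℝ s) (l : ℝ) :
    ConcaveOn ℝ s (supportingUB X Y l) := by
  refine ⟨hs, fun q _ q' _ a b _ _ hab => le_of_eq ?_⟩
  simp only [supportingUB, Prod.fst_add, Prod.snd_add, Prod.smul_fst, Prod.smul_snd, smul_eq_mul]
  linear_combination hab

theorem valueMaxUB_le_supportingUB (hX : 0 < X) (hY : 0 < Y) {q : ℝ × ℝ} (hq : 0 < q.2) {l : ℝ}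
    (hl : l ≤ 1) : valueMaxUB X Y q ≤ supportingUB X Y l q := by
  obtain ⟨s, m⟩ := q
  simp only [valueMaxUB, supportingUB] at hq ⊢
  rw [← sub_nonneg]
  split_ifs with h
  · calc 0 ≤ (Y * s - l * X * m) ^ 2 / (2 * X * Y * m) := by positivity
      _ = 1 - l * s + l ^ 2 * (X / (2 * Y) * m) - (1 - Y / (2 * X) * s ^ 2 / m) := by
        field_simp
        ring
  · have hm_le : X / Y * m ≤ s := by
      rw [← inv_div, inv_mul_le_iff₀ (div_pos hY hX)]
      exact (not_le.1 h).le
    calc 0 ≤ (1 - l) * (s - X / Y * m) + (1 - l) ^ 2 * (X / (2 * Y) * m) :=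
          add_nonneg (mul_nonneg (sub_nonneg.2 hl) (sub_nonneg.2 hm_le)) (by positivity)
      _ = 1 - l * s + l ^ 2 * (X / (2 * Y) * m) - (1 - s + X / (2 * Y) * m) := by
        field_simp
        ring

theorem exists_supportingUB_eq_valueMaxUB (hX : X ≠ 0) {q : ℝ × ℝ} (hq : 0 < q.2) :
    ∃ l ≤ 1, supportingUB X Y l q = valueMaxUB X Y q := by
  obtain ⟨s, m⟩ := q
  simp only [valueMaxUB, supportingUB] at hq ⊢
  split_ifs with h
  · refine ⟨Y / X * s / m, (div_le_one hq).2 h, ?_⟩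
    field_simp
    ring
  · exact ⟨1, le_rfl, by ring⟩

theorem isLeast_valueMaxUB (hX : 0 < X) (hY : 0 < Y) {q : ℝ × ℝ} (hq : 0 < q.2) :
    IsLeast ((supportingUB X Y · q) '' Set.Iic 1) (valueMaxUB X Y q) := by
  refine ⟨exists_supportingUB_eq_valueMaxUB hX.ne' hq, ?_⟩
  rintro _ ⟨l, hl, rfl⟩
  exact valueMaxUB_le_supportingUB hX hY hq hl

theorem concaveOn_valueMaxUB (hX : 0 < X) (hY : 0 < Y) :
    ConcaveOn ℝ {q : ℝ × ℝ | 0 < q.2} (valueMaxUB X Y) := by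
  have hconv : Convex ℝ {q : ℝ × ℝ | 0 < q.2} :=
    convex_halfSpace_gt (LinearMap.snd ℝ ℝ ℝ).isLinear 0
  exact concaveOn_of_isLeast_image hconv (fun l _ => concaveOn_supportingUB hconv l)
    fun _ hq => isLeast_valueMaxUB hX hY hq

end ValueMax

section Qset

variable {C : ℕ} {v : Fin C → ℝ} {S : Finset (Fin C)} {p : Fin C → ℝ} {c : Fin C}

theorem mem_Qset_iff :
    p ∈ Qset C v S ↔ p ∈ stdSimplex ℝ (Fin C) ∧ ∀ i ∈ S, ∀ j, v j * p j ≤ v i * p i :=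
  and_congr_right fun _ => forall₂_congr fun _ _ =>
    eq_ciSup_iff_forall_le (f := fun j => v j * p j)

theorem convex_Qset : Convex ℝ (Qset C v S) := by
  intro p hp p' hp' a b ha hb hab
  rw [mem_Qset_iff] at hp hp' ⊢
  refine ⟨convex_stdSimplex ℝ (Fin C) hp.1 hp'.1 ha hb hab, fun i hi j => ?_⟩
  calc v j * (a * p j + b * p' j) = a * (v j * p j) + b * (v j * p' j) := by ring
    _ ≤ a * (v i * p i) + b * (v i * p' i) := by
      gcongr a * ?_ + b * ?_
      exacts [hp.2 i hi j, hp'.2 i hi j]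
    _ = v i * (a * p i + b * p' i) := by ring

theorem mul_pos_of_mem_Qset (hv : ∀ i, 0 < v i) (hp : p ∈ Qset C v S) (hc : c ∈ S) :
    0 < v c * p c := by
  obtain ⟨hp_simplex, hmax⟩ := mem_Qset_iff.1 hp
  obtain ⟨i, hi⟩ := exists_pos_of_mem_stdSimplex hp_simplex
  exact (mul_pos (hv i) hi).trans_le (hmax c hc i)

/-- The map `p ↦ (vᵀp, v_c p_c)`, whose second coordinate is the maximum `max_i v_i p_i` exactly
when contest `c` attains it; fixing `c` makes the map linear. -/
def valueMaxMap (v : Fin C → ℝ) (c : Fin C) : (Fin C → ℝ) →ₗ[ℝ] ℝ × ℝ :=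
  (∑ i, v i • LinearMap.proj i).prod (v c • LinearMap.proj c)

theorem valueMaxMap_apply : valueMaxMap v c p = (∑ i, v i * p i, v c * p c) := by
  simp [valueMaxMap]

theorem UB_eq_valueMaxUB_of_mem_Qset (X Y : ℝ) (hp : p ∈ Qset C v S) (hc : c ∈ S) :
    UB C v X Y p = valueMaxUB X Y (valueMaxMap v c p) := by
  rw [valueMaxMap_apply, hp.2 c hc]
  rfl

end Qset

theorem UB_concave_on_Qc_general {C : ℕ} {v : Fin C → ℝ} (hv : ∀ i, 0 < v i) {X Y : ℝ}
    (hX : 0 < X) (hY : 0 < Y) {S : Finset (Fin C)} (hS : S.Nonempty) :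
    ConcaveOn ℝ (Qset C v S) (UB C v X Y) := by
  obtain ⟨c, hc⟩ := hS
  have hsub : Qset C v S ⊆ valueMaxMap v c ⁻¹' {q | 0 < q.2} := fun p hp => by
    rw [Set.mem_preimage, valueMaxMap_apply]
    exact mul_pos_of_mem_Qset hv hp hc
  exact (((concaveOn_valueMaxUB hX hY).comp_linearMap (valueMaxMap v c)).subset hsub
    convex_Qset).congr fun _ hp => (UB_eq_valueMaxUB_of_mem_Qset X Y hp hc).symm

/-- Lemma 6: for each contest `c`, the function `UB` is concave on the set
`Q_{{c}}`. -/
theorem UB_concave_on_Qc (C : ℕ) (v : Fin C → ℝ)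
    (hpos : ∀ c, 0 < v c) (hdec : StrictAnti v) (hsum : ∑ c, v c = 1)
    (X Y : ℝ) (hX : 0 < X) (hY : 0 < Y) (c : Fin C)
    (p p' : Fin C → ℝ) (hp : p ∈ Qset C v {c}) (hp' : p' ∈ Qset C v {c})
    (t : ℝ) (ht : t ∈ Set.Icc (0 : ℝ) 1) :
    t * UB C v X Y p + (1 - t) * UB C v X Y p' ≤
      UB C v X Y (fun i => t * p i + (1 - t) * p' i) :=
  (UB_concave_on_Qc_general hpos hX hY (singleton_nonempty c)).2 hp hp' ht.1 (sub_nonneg.2 ht.2)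
    (add_sub_cancel t 1)
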